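/- Let a, b, b', c, c' be complex numbers with c, c' not nonpositive integers, and let x, y be real numbers with |x| + |y| < 1 such that |x/(x−1)| + |y/(1−x)| < 1. Then F₂(a; b, b'; c, c'; x, y) = (1−x)^{−a} · F₂(a; c−b, b'; c, c'; x/(x−1), y/(1−x)). -/

import Mathlib

noncomputable def poch (a : ℂ) (n : ℕ) : ℂ := ∏ i ∈ Finset.range n, (a + i)

/-- Appell series F₂(a;b,b';c,c';x,y). -/
noncomputable def appellF2 (a b b' c c' x y : ℂ) : ℂ :=
  ∑' p : ℕ × ℕ, poch a (p.1 + p.2) * poch b p.1 * poch b' p.2 /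
    (p.1.factorial * p.2.factorial * poch c p.1 * poch c' p.2) * x ^ p.1 * y ^ p.2

open Finset in
theorem poch_succ (a : ℂ) (n : ℕ) : poch a (n + 1) = poch a n * (a + n) := by
  simp [poch, prod_range_succ]

theorem poch_zero (a : ℂ) : poch a 0 = 1 := by simp [poch]

theorem poch_add (a : ℂ) (m k : ℕ) : poch a (m + k) = poch a m * poch (a + m) k := by
  simp only [poch, Finset.prod_range_add]
  congr 1
  refine Finset.prod_congr rfl fun i _ => ?_
  push_cast
  ring

theorem poch_succ' (a : ℂ) (n : ℕ) : poch a (n + 1) = a * poch (a + 1) n := by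
  rw [add_comm n 1, poch_add]
  simp [poch]

theorem poch_one (n : ℕ) : poch 1 n = n.factorial := by
  induction n with
  | zero => simp [poch]
  | succ n ih =>
    rw [poch_succ, ih, Nat.factorial_succ]
    push_cast
    ring

theorem poch_ne_zero {c : ℂ} (hc : ∀ n : ℕ, c ≠ -(n : ℂ)) (n : ℕ) : poch c n ≠ 0 := by
  refine Finset.prod_ne_zero_iff.mpr fun i _ h => hc i ?_
  exact eq_neg_of_add_eq_zero_left h

theorem chu_vandermonde (N : ℕ) : ∀ (c d : ℂ), (∀ n : ℕ, c ≠ -(n : ℂ)) →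
    ∑ ij ∈ Finset.HasAntidiagonal.antidiagonal N, (N.choose ij.1 : ℂ) * ((-1) ^ ij.1 * poch d ij.1 / poch c ij.1)
      = poch (c - d) N / poch c N := by
  induction N with
  | zero => intro c d hc; simp [poch]
  | succ N ih =>
    intro c d hc
    have hc1 : ∀ n : ℕ, c + 1 ≠ -(n : ℂ) := by
      intro n h
      apply hc (n + 1)
      push_cast
      linear_combination h
    have hc0 : c ≠ 0 := by simpa using hc 0
    have hcN : c + N ≠ 0 := fun h => hc N (eq_neg_of_add_eq_zero_left h)
    rw [Finset.sum_antidiagonal_choose_succ_mul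
      (fun i _ => (-1 : ℂ) ^ i * poch d i / poch c i) N, ih c d hc]
    have h2 : ∑ ij ∈ Finset.HasAntidiagonal.antidiagonal N, (N.choose ij.2 : ℂ) *
        ((-1) ^ (ij.1 + 1) * poch d (ij.1 + 1) / poch c (ij.1 + 1)) =
        -(d / c) * ∑ ij ∈ Finset.HasAntidiagonal.antidiagonal N, (N.choose ij.1 : ℂ) *
          ((-1) ^ ij.1 * poch (d + 1) ij.1 / poch (c + 1) ij.1) := by
      rw [Finset.mul_sum]
      refine Finset.sum_congr rfl fun ij hij => ?_
      have hij' : ij.1 + ij.2 = N := by simpa using hij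
      have : N.choose ij.2 = N.choose ij.1 := by
        rw [← hij', ← Nat.choose_symm_add]
      rw [this, poch_succ', poch_succ', pow_succ]
      have := poch_ne_zero hc1 ij.1
      field_simp
    rw [h2, ih (c + 1) (d + 1) hc1]
    have e1 : c + 1 - (d + 1) = c - d := by ring
    have h3 : poch c N * (c + N) = c * poch (c + 1) N := by rw [← poch_succ, poch_succ']
    have n1 := poch_ne_zero hc N
    have n2 := poch_ne_zero hc1 N
    rw [e1, poch_succ, poch_succ]
    have h4 : poch (c + 1) N = poch c N * (c + N) / c := by
      rw [h3]; field_simp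
    rw [h4]
    field_simp
    ring

theorem poch_bound (u v : ℂ) (hv : ∀ n : ℕ, v ≠ -(n : ℂ)) (r : ℝ) (hr : 1 < r) :
    ∃ C : ℝ, 0 ≤ C ∧ ∀ n : ℕ, ‖poch u n‖ ≤ C * r ^ n * ‖poch v n‖ := by
  obtain ⟨N, hN⟩ := exists_nat_ge ((‖u‖ + r * ‖v‖) / (r - 1))
  have hr0 : 0 < r := by linarith
  have step : ∀ i : ℕ, N ≤ i → ‖u + i‖ ≤ r * ‖v + i‖ := by
    intro i hi
    have hi' : (N : ℝ) ≤ i := by exact_mod_cast hi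
    rw [div_le_iff₀ (by linarith)] at hN
    have h1 : ‖u + i‖ ≤ ‖u‖ + i := by simpa using norm_add_le u (i : ℂ)
    have h2 : (i : ℝ) ≤ ‖v + i‖ + ‖v‖ := by
      have := norm_sub_le (v + i) v
      simpa using this
    nlinarith
  have hp : ∀ n, 0 < ‖poch v n‖ := fun n => norm_pos_iff.mpr (poch_ne_zero hv n)
  set g : ℕ → ℝ := fun n => ‖poch u n‖ / (r ^ n * ‖poch v n‖) with hg
  have hg0 : ∀ n, 0 ≤ g n := fun n => by have := hp n; positivity
  refine ⟨∑ i ∈ Finset.range (N + 1), g i, Finset.sum_nonneg fun i _ => hg0 i, ?_⟩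
  have key : ∀ n, g n ≤ ∑ i ∈ Finset.range (N + 1), g i := by
    intro n
    by_cases h : n < N + 1
    · exact Finset.single_le_sum (fun i _ => hg0 i) (Finset.mem_range.mpr h)
    · have h' : N ≤ n := by omega
      clear h
      induction n, h' using Nat.le_induction with
      | base => exact Finset.single_le_sum (fun i _ => hg0 i) (Finset.mem_range.mpr (by omega))
      | succ n hn ih =>
        refine le_trans ?_ ih
        simp only [hg]
        have p1 := hp n
        have p2 := hp (n + 1)
        rw [div_le_div_iff₀ (by positivity) (by positivity), poch_succ, poch_succ, norm_mul,
          norm_mul, pow_succ]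
        have := mul_le_mul_of_nonneg_left (step n hn)
          (show 0 ≤ ‖poch u n‖ * (r ^ n * ‖poch v n‖) by positivity)
        linarith
  intro n
  have p1 := hp n
  have := key n
  simp only [hg] at this
  rw [div_le_iff₀ (by positivity)] at this
  linarith

theorem binom_hasSum (s z : ℂ) (hz : ‖z‖ < 1) :
    HasSum (fun k : ℕ => poch s k / k.factorial * z ^ k) ((1 - z) ^ (-s)) := by
  have h := (Complex.one_div_one_sub_cpow_hasFPowerSeriesOnBall_zero s).hasSum
    (y := z) (by simpa [← ofReal_norm] using hz)
  rw [Complex.cpow_neg]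
  convert! h using 1
  · funext k
    have h1 := Ring.factorial_nsmul_multichoose_eq_ascPochhammer s k
    have h2 : (ascPochhammer ℕ k).smeval s = poch s k := by
      clear h1
      induction k with
      | zero => simp [poch]
      | succ k ih => 
        rw [ascPochhammer_succ_right, Polynomial.smeval_mul, ih, poch_succ]
        simp [Polynomial.smeval_add, Polynomial.smeval_natCast]
    rw [h2, nsmul_eq_mul] at h1
    have : (k.factorial : ℂ) ≠ 0 := by exact_mod_cast k.factorial_ne_zero
    simp [FormalMultilinearSeries.ofScalars, ← h1, this, ← Ring.multichoose_eq]
  · simp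

def triEquiv : (Σ p : ℕ × ℕ, Finset.HasAntidiagonal.antidiagonal p.1) ≃ (ℕ × ℕ) × ℕ where
  toFun q := ((q.2.1.1, q.1.2), q.2.1.2)
  invFun q := ⟨(q.1.1 + q.2, q.1.2), ⟨(q.1.1, q.2), by simp⟩⟩
  left_inv := by
    rintro ⟨⟨N, n⟩, ⟨⟨m, k⟩, h⟩⟩
    have h' : m + k = N := by simpa using h
    subst h'
    rfl
  right_inv := by
    rintro ⟨⟨m, n⟩, k⟩
    rfl

theorem fac_ratio (i j : ℕ) : ((i + j).choose i : ℝ) =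
    (i + j).factorial / (i.factorial * j.factorial) := by
  have h := Nat.add_choose_mul_factorial_mul_factorial i j
  rw [← Nat.choose_symm_add] at h
  have h' : ((i + j).choose i : ℝ) * i.factorial * j.factorial = (i + j).factorial := by
    exact_mod_cast h
  have : (i.factorial : ℝ) ≠ 0 := by exact_mod_cast i.factorial_ne_zero
  have : (j.factorial : ℝ) ≠ 0 := by exact_mod_cast j.factorial_ne_zero
  field_simp
  linarith

theorem summable_two (Z Y : ℝ) (hZ : 0 ≤ Z) (hY : 0 ≤ Y) (h : Z + Y < 1) :
    Summable (fun p : ℕ × ℕ => ((p.1 + p.2).factorial : ℝ) / (p.1.factorial * p.2.factorial)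
      * Z ^ p.1 * Y ^ p.2) := by
  rw [← Finset.HasAntidiagonal.sigmaAntidiagonalEquivProd.summable_iff,
    summable_sigma_of_nonneg (fun q => by simp only [Function.comp]; positivity)]
  refine ⟨fun N => Summable.of_finite, ?_⟩
  refine (summable_geometric_of_lt_one (by positivity) h).congr fun N => ?_
  rw [tsum_fintype, (Commute.all Z Y).add_pow', ← Finset.sum_coe_sort]
  refine Finset.sum_congr rfl fun ij _ => ?_
  have hij : ij.1.1 + ij.1.2 = N := Finset.HasAntidiagonal.mem_antidiagonal.mp ij.2
  have hf := fac_ratio ij.1.1 ij.1.2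
  rw [hij] at hf
  simp only [Function.comp, Finset.HasAntidiagonal.sigmaAntidiagonalEquivProd_apply, nsmul_eq_mul]
  rw [hf, hij]
  ring

theorem summable_three (X Y : ℝ) (hX : 0 ≤ X) (hY : 0 ≤ Y) (h : 2 * X + Y < 1) :
    Summable (fun q : (ℕ × ℕ) × ℕ => ((q.1.1 + q.1.2 + q.2).factorial : ℝ) /
      (q.1.1.factorial * q.1.2.factorial * q.2.factorial) * X ^ (q.1.1 + q.2) * Y ^ q.1.2) := by
  rw [← triEquiv.summable_iff,
    summable_sigma_of_nonneg (fun q => by simp only [Function.comp]; positivity)]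
  refine ⟨fun N => Summable.of_finite, ?_⟩
  refine (summable_two (2 * X) Y (by positivity) hY h).congr fun p => ?_
  obtain ⟨N, n⟩ := p
  rw [tsum_fintype, two_mul, (Commute.all X X).add_pow', ← Finset.sum_coe_sort, Finset.mul_sum,
    Finset.sum_mul]
  refine Finset.sum_congr rfl fun ij _ => ?_
  have hij : ij.1.1 + ij.1.2 = N := Finset.HasAntidiagonal.mem_antidiagonal.mp ij.2
  have hf := fac_ratio ij.1.1 ij.1.2
  rw [hij] at hf
  simp only [Function.comp, triEquiv, Equiv.coe_fn_mk, nsmul_eq_mul]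
  rw [show ij.1.1 + n + ij.1.2 = N + n by omega, hf, pow_add]
  have : (N.factorial : ℝ) ≠ 0 := by
    exact_mod_cast Nat.factorial_ne_zero _
  field_simp

/-- The general term of the triple series. -/
noncomputable def triTerm (a d b' c c' x y : ℂ) (q : (ℕ × ℕ) × ℕ) : ℂ :=
  poch a (q.1.1 + q.1.2 + q.2) * poch d q.1.1 * poch b' q.1.2 /
    (q.1.1.factorial * q.1.2.factorial * q.2.factorial * poch c q.1.1 * poch c' q.1.2) *
    (-1) ^ q.1.1 * x ^ (q.1.1 + q.2) * y ^ q.1.2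

theorem triTerm_summable (a d b' c c' : ℂ) (x y : ℝ) (hx : 0 ≤ x)
    (hc : ∀ n : ℕ, c ≠ -(n : ℂ)) (hc' : ∀ n : ℕ, c' ≠ -(n : ℂ))
    (h : 2 * x + |y| < 1) : Summable (triTerm a d b' c c' x y) := by
  set s := 2 * x + |y| with hs
  have hs0 : 0 ≤ s := by positivity
  set R : ℝ := 2 / (1 + s) with hR
  have hR1 : 1 < R := by rw [hR, lt_div_iff₀ (by positivity)]; linarith
  have hRs : R * s < 1 := by
    rw [hR, div_mul_eq_mul_div, div_lt_one (by positivity)]; linarith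
  set r := √R with hr
  have hr1 : 1 < r := by rw [hr]; exact Real.lt_sqrt_of_sq_lt (by simpa using hR1)
  have hrr : r * r = R := Real.mul_self_sqrt (by linarith)
  have hone : ∀ n : ℕ, (1 : ℂ) ≠ -(n : ℂ) := by
    intro n hn
    have h2 : ((n + 1 : ℕ) : ℂ) = 0 := by push_cast; linear_combination hn
    exact absurd (Nat.cast_eq_zero.mp h2) (by omega)
  obtain ⟨C1, h10, h1⟩ := poch_bound a 1 hone r hr1
  obtain ⟨C2, h20, h2⟩ := poch_bound d c hc r hr1
  obtain ⟨C3, h30, h3⟩ := poch_bound b' c' hc' r hr1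
  have hS := (summable_three (R * x) (R * |y|) (by positivity) (by positivity)
    (by rw [hs] at hRs; linarith)).mul_left (C1 * C2 * C3)
  refine Summable.of_norm_bounded hS ?_
  rintro ⟨⟨m, n⟩, k⟩
  have p2 : 0 < ‖poch c m‖ := norm_pos_iff.mpr (poch_ne_zero hc m)
  have p3 : 0 < ‖poch c' n‖ := norm_pos_iff.mpr (poch_ne_zero hc' n)
  have q1 := h1 (m + n + k)
  have q2 := h2 m
  have q3 := h3 n
  rw [poch_one] at q1
  simp only [Complex.norm_natCast] at q1
  have hr0 : 0 < r := by linarith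
  simp only [triTerm, norm_mul, norm_div, norm_pow, norm_neg, norm_one, one_pow,
    Complex.norm_natCast, Complex.norm_real, Real.norm_eq_abs, abs_of_nonneg hx, mul_one]
  have hle : ‖poch a (m + n + k)‖ * ‖poch d m‖ * ‖poch b' n‖ ≤
      (C1 * r ^ (m + n + k) * (m + n + k).factorial) * (C2 * r ^ m * ‖poch c m‖) *
        (C3 * r ^ n * ‖poch c' n‖) := by
    gcongr
  have hrk : r ^ m * r ^ n ≤ r ^ (m + n + k) := by
    rw [← pow_add]
    exact pow_le_pow_right₀ hr1.le (by omega)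
  calc _ ≤ ((C1 * r ^ (m + n + k) * (m + n + k).factorial) * (C2 * r ^ m * ‖poch c m‖) *
        (C3 * r ^ n * ‖poch c' n‖)) / (m.factorial * n.factorial * k.factorial * ‖poch c m‖ *
          ‖poch c' n‖) * x ^ (m + k) * |y| ^ n := by gcongr
    _ = (C1 * C2 * C3) * ((m + n + k).factorial / (m.factorial * n.factorial * k.factorial)) *
        r ^ (m + n + k) * (r ^ m * r ^ n) * x ^ (m + k) * |y| ^ n := by
        field_simp
    _ ≤ (C1 * C2 * C3) * ((m + n + k).factorial / (m.factorial * n.factorial * k.factorial)) *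
        r ^ (m + n + k) * r ^ (m + n + k) * x ^ (m + k) * |y| ^ n := by gcongr
    _ = _ := by
        rw [← hrr]
        ring

set_option maxHeartbeats 1000000 in
theorem main_nonneg (a b b' c c' : ℂ) (x y : ℝ)
    (hc : ∀ n : ℕ, c ≠ -(n : ℂ)) (hc' : ∀ n : ℕ, c' ≠ -(n : ℂ)) (hx : 0 ≤ x)
    (h : 2 * x + |y| < 1) :
    appellF2 a b b' c c' x y =
      ((1 : ℂ) - x) ^ (-a) *
        appellF2 a (c - b) b' c c' ((x : ℂ) / (x - 1)) ((y : ℂ) / (1 - x)) := by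
  have hS := triTerm_summable a (c - b) b' c c' x y hx hc hc' h
  have hx1 : x < 1 := by have := abs_nonneg y; linarith
  have hne : (1 : ℂ) - x ≠ 0 := by
    have : (1 - x : ℝ) ≠ 0 := by linarith
    exact_mod_cast this
  have hne' : (x : ℂ) - 1 ≠ 0 := fun h => hne (by linear_combination -h)
  have hfac : ∀ i : ℕ, (i.factorial : ℂ) ≠ 0 := fun i => by exact_mod_cast i.factorial_ne_zero
  have R1 : HasSum (fun p : ℕ × ℕ => ((1 : ℂ) - x) ^ (-a) *
      (poch a (p.1 + p.2) * poch (c - b) p.1 * poch b' p.2 /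
    (p.1.factorial * p.2.factorial * poch c p.1 * poch c' p.2) * ((x : ℂ) / (x - 1)) ^ p.1 *
      ((y : ℂ) / (1 - x)) ^ p.2)) (∑' q, triTerm a (c - b) b' c c' x y q) := by
    refine hS.hasSum.prod_fiberwise ?_
    rintro ⟨m, n⟩
    have hb := (binom_hasSum (a + (m + n : ℕ)) x
      (by simpa [abs_of_nonneg hx] using hx1)).mul_left (poch a (m + n) * poch (c - b) m * poch b' n /
      (m.factorial * n.factorial * poch c m * poch c' n) * (-1) ^ m * x ^ m * y ^ n)
    convert! hb using 1
    · funext k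
      simp only [triTerm, poch_add a (m + n) k, pow_add]
      have n1 := poch_ne_zero hc m
      have n2 := poch_ne_zero hc' n
      have n3 := hfac m
      have n4 := hfac n
      have n5 := hfac k
      field_simp
    · rw [neg_add, Complex.cpow_add _ _ hne, Complex.cpow_neg _ ((m + n : ℕ) : ℂ),
        Complex.cpow_natCast]
      have e : (x : ℂ) / (x - 1) = (-1) * (x / (1 - x)) := by
        field_simp
        ring
      simp only [e, mul_pow, div_pow, pow_add]
      generalize (1 : ℂ) - x = w
      ring
  have L1 : HasSum (fun p : ℕ × ℕ => poch a (p.1 + p.2) * poch b p.1 * poch b' p.2 /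
    (p.1.factorial * p.2.factorial * poch c p.1 * poch c' p.2) * (x : ℂ) ^ p.1 * (y : ℂ) ^ p.2)
      (∑' q, triTerm a (c - b) b' c c' x y q) := by
    have hS' := triEquiv.hasSum_iff.mpr hS.hasSum
    refine hS'.sigma ?_
    rintro ⟨N, n⟩
    convert hasSum_fintype _ using 1
    have cv := chu_vandermonde N c (c - b) hc
    rw [sub_sub_cancel] at cv
    have e : poch a (N + n) * poch b N * poch b' n /
        (N.factorial * n.factorial * poch c N * poch c' n) * (x : ℂ) ^ N * (y : ℂ) ^ n =
        poch a (N + n) * poch b' n / (N.factorial * n.factorial * poch c' n) * (x : ℂ) ^ N *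
          (y : ℂ) ^ n * (poch b N / poch c N) := by
      have n1 := poch_ne_zero hc N
      have n2 := poch_ne_zero hc' n
      have n3 := hfac N
      have n4 := hfac n
      field_simp
    simp only
    rw [e, ← cv, Finset.mul_sum, ← Finset.sum_coe_sort]
    refine Finset.sum_congr rfl fun ij _ => ?_
    have hij : ij.1.1 + ij.1.2 = N := Finset.HasAntidiagonal.mem_antidiagonal.mp ij.2
    simp only [Function.comp, triEquiv, Equiv.coe_fn_mk, triTerm]
    rw [show ij.1.1 + n + ij.1.2 = N + n by omega, hij]
    have hch : (N.choose ij.1.1 : ℂ) = N.factorial / (ij.1.1.factorial * ij.1.2.factorial) := by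
      have := fac_ratio ij.1.1 ij.1.2
      rw [hij] at this
      have h2 := congrArg (fun t : ℝ => (t : ℂ)) this
      push_cast at h2
      exact h2
    rw [hch]
    have n1 := poch_ne_zero hc ij.1.1
    have n2 := poch_ne_zero hc' n
    have n3 := hfac N
    have n4 := hfac n
    have n5 := hfac ij.1.1
    have n6 := hfac ij.1.2
    field_simp
  rw [appellF2, appellF2, ← tsum_mul_left, L1.tsum_eq, R1.tsum_eq]

theorem appellF2_transformation (a b b' c c' : ℂ) (x y : ℝ)
    (hc : ∀ n : ℕ, c ≠ -(n : ℂ)) (hc' : ∀ n : ℕ, c' ≠ -(n : ℂ))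
    (hxy : |x| + |y| < 1)
    (hxy' : |x / (x - 1)| + |y / (1 - x)| < 1) :
    appellF2 a b b' c c' x y =
      ((1 : ℂ) - x) ^ (-a) *
        appellF2 a (c - b) b' c c' ((x : ℂ) / (x - 1)) ((y : ℂ) / (1 - x)) := by
  have hx1 : x < 1 := by
    have := abs_nonneg y
    have := le_abs_self x
    linarith
  have hpos : 0 < 1 - x := by linarith
  by_cases hx : 0 ≤ x
  · refine main_nonneg a b b' c c' x y hc hc' hx ?_
    rw [abs_div, abs_div, abs_of_nonneg hx, abs_of_neg (show x - 1 < 0 by linarith),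
      abs_of_pos hpos, neg_sub, ← add_div, div_lt_one hpos] at hxy'
    linarith
  · have hx' : x < 0 := not_le.mp hx
    have hne : (1 : ℂ) - x ≠ 0 := by
      have : (1 - x : ℝ) ≠ 0 := by linarith
      exact_mod_cast this
    have hne' : (x : ℂ) - 1 ≠ 0 := fun h => hne (by linear_combination -h)
    have hm := main_nonneg a (c - b) b' c c' (x / (x - 1)) (y / (1 - x)) hc hc'
      (div_nonneg_of_nonpos hx'.le (by linarith)) (by
        rw [abs_div, abs_of_pos hpos, show x / (x - 1) = (-x) / (1 - x) by
          rw [← neg_sub 1 x, div_neg, neg_div], ← mul_div_assoc, ← add_div, div_lt_one hpos]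
        rw [abs_of_neg hx'] at hxy
        linarith)
    have e0 : (1 : ℂ) - x / (x - 1) = ((1 : ℂ) - x)⁻¹ := by
      field_simp
      ring
    have e1 : (x : ℂ) / (x - 1) / (x / (x - 1) - 1) = x := by
      have : (x : ℂ) / (x - 1) - 1 = 1 / (x - 1) := by field_simp; ring
      rw [this]
      field_simp
    push_cast at hm
    have e2 : (y : ℂ) / (1 - x) / ((1 : ℂ) - x)⁻¹ = y := by
      field_simp
    rw [sub_sub_cancel, e1, e0, e2] at hm
    rw [hm, ← mul_assoc]
    have e3 : ((1 : ℂ) - x) ^ (-a) * (((1 : ℂ) - x)⁻¹) ^ (-a) = 1 := by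
      rw [Complex.inv_cpow, mul_inv_cancel₀]
      · rw [Complex.cpow_ne_zero_iff]
        exact Or.inl hne
      · have : (1 : ℂ) - x = ((1 - x : ℝ) : ℂ) := by push_cast; rfl
        rw [this, Complex.arg_ofReal_of_nonneg hpos.le]
        exact Real.pi_pos.ne
    rw [e3, one_mul]
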